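/- Let A ⊂ ℤ≥0 be finite with 0 ∈ A, N = #A ≥ 2, and suppose A ⊂ [0, M] with M < 5N/2. If A(x) = Σ_{a∈A} x^a has a spectrum θ₁,...,θ_{N-1}, then all θⱼ are rational. -/

import Mathlib

open Complex

section SpectralRationality

open Finset Polynomial
open scoped Pointwise

/-- A polynomial with `0`-`1` coefficients, exponent set `A ∋ 0` and degree at most `M` has at most
`M` distinct complex roots. -/
lemma card_le_of_sum_pow_eq_zero {A : Finset ℕ} (h0A : 0 ∈ A) {M : ℕ} (hAM : ∀ a ∈ A, a ≤ M)
    (R : Finset ℂ) (hR : ∀ z ∈ R, ∑ a ∈ A, z ^ a = 0) : #R ≤ M := by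
  set P : ℂ[X] := ∑ a ∈ A, X ^ a with hP
  have hcoeff : P.coeff 0 = 1 := by
    rw [hP, finsetSum_coeff, Finset.sum_eq_single_of_mem 0 h0A]
    · simp
    · intro a _ ha
      simp [coeff_X_pow, ha.symm]
  have hP0 : P ≠ 0 := by
    rintro h
    simp [h] at hcoeff
  have hdeg : P.natDegree ≤ M := by
    refine natDegree_sum_le_of_forall_le _ _ fun a ha => ?_
    simpa using hAM a ha
  refine (card_le_degree_of_subset_roots fun z hz => ?_).trans hdeg
  rw [mem_roots hP0, IsRoot.def, hP, eval_finsetSum]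
  simpa using hR z hz

/-- Power sums over a finite set closed under division are either `#H` or zero. -/
lemma sum_pow_of_div_mem {K : Type*} [Field K] [DecidableEq K] {H : Finset K} (h0 : (0 : K) ∉ H)
    (hdiv : ∀ x ∈ H, ∀ y ∈ H, x / y ∈ H) (a : ℕ) [Decidable (∀ h ∈ H, h ^ a = 1)] :
    ∑ h ∈ H, h ^ a = if ∀ h ∈ H, h ^ a = 1 then (#H : K) else 0 := by
  split_ifs with hall
  · rw [Finset.sum_congr rfl hall]
    simp
  · push Not at hall
    obtain ⟨g, hg, hga⟩ := hall
    have hg0 : g ≠ 0 := fun h => h0 (h ▸ hg)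
    have hdinj : Function.Injective (· / g) := fun _ _ h => (div_left_inj' hg0).1 h
    have himage : H.image (· / g) = H := by
      refine Finset.eq_of_subset_of_card_le ?_ ?_
      · intro x hx
        obtain ⟨y, hy, rfl⟩ := Finset.mem_image.1 hx
        exact hdiv y hy g hg
      · rw [Finset.card_image_of_injective _ hdinj]
    have hsum : ∑ h ∈ H, h ^ a = (∑ h ∈ H, h ^ a) / g ^ a := by
      conv_lhs => rw [← himage]
      rw [Finset.sum_image hdinj.injOn, Finset.sum_div]
      simp [div_pow]
    rw [eq_div_iff (pow_ne_zero _ hg0)] at hsum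
    have : (∑ h ∈ H, h ^ a) * (g ^ a - 1) = 0 := by linear_combination hsum
    exact (mul_eq_zero.1 this).resolve_right (sub_ne_zero.2 hga)

/-- If `A(x) = ∑ x ^ a` vanishes on `H \ {1}` and on a coset `g H` of a finite multiplicative
group `H` with `#A = 2 * #H`, then some positive power of `g` equals `-1`. -/
lemma exists_pow_eq_neg_one {K : Type*} [Field K] [CharZero K] [DecidableEq K]
    {A : Finset ℕ} (h0A : 0 ∈ A) {H : Finset K} (h0 : (0 : K) ∉ H) (h1 : (1 : K) ∈ H)
    (hdiv : ∀ x ∈ H, ∀ y ∈ H, x / y ∈ H) (hcard : #A = 2 * #H)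
    (hH : ∀ h ∈ H, h ≠ 1 → ∑ a ∈ A, h ^ a = 0) {g : K}
    (hg : ∀ h ∈ H, ∑ a ∈ A, (g * h) ^ a = 0) : ∃ c ≠ 0, g ^ c = -1 := by
  classical
  have hm : (#H : K) ≠ 0 := by
    exact_mod_cast (Finset.card_pos.2 ⟨1, h1⟩).ne'
  set A₀ := A.filter fun a => ∀ h ∈ H, h ^ a = 1 with hA₀
  have hsum (g : K) : ∑ h ∈ H, ∑ a ∈ A, (g * h) ^ a = #H * ∑ a ∈ A₀, g ^ a := by
    rw [Finset.sum_comm, hA₀, Finset.sum_filter, Finset.mul_sum]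
    refine Finset.sum_congr rfl fun a _ => ?_
    simp_rw [mul_pow]
    rw [← Finset.mul_sum, sum_pow_of_div_mem h0 hdiv]
    split_ifs <;> ring
  have hA₀card : #A₀ = 2 := by
    have h := hsum 1
    rw [Finset.sum_eq_single_of_mem 1 h1 (fun h hh hne => by simpa using hH h hh hne)] at h
    simp only [mul_one, one_pow, Finset.sum_const, nsmul_eq_mul, hcard] at h
    push_cast at h
    have : (#A₀ : K) = 2 := mul_left_cancel₀ hm (by linear_combination -h)
    exact_mod_cast this
  have h0A₀ : 0 ∈ A₀ := by simp [hA₀, h0A]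
  obtain ⟨c, hc⟩ := Finset.card_eq_one.1 (show #(A₀.erase 0) = 1 by
    rw [Finset.card_erase_of_mem h0A₀, hA₀card])
  have hc0 : c ≠ 0 := Finset.ne_of_mem_erase (hc ▸ Finset.mem_singleton_self c)
  refine ⟨c, hc0, ?_⟩
  have h := hsum g
  rw [Finset.sum_eq_zero hg, ← Finset.add_sum_erase _ _ h0A₀, hc] at h
  have := (mul_eq_zero.1 h.symm).resolve_left hm
  simp only [pow_zero, Finset.sum_singleton] at this
  linear_combination this

/-- If all ratios of the `#A` elements of `S` are roots of `A(x) = ∑ x ^ a`, where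
`A ⊆ [0, M]` with `M < 5 * #A / 2`, and one embedding maps `S` into the unit circle, then every
embedding maps `S` into a circle. -/
lemma norm_eq_norm_of_ratios_roots {K : Type*} [Field K] (ι φ : K →+* ℂ)
    {A : Finset ℕ} (h0A : 0 ∈ A) {M : ℕ} (hAM : ∀ a ∈ A, a ≤ M) (hM : 2 * M < 5 * #A)
    {S : Finset K} (hcard : #S = #A) (hι : ∀ x ∈ S, ‖ι x‖ = 1)
    (hroot : ∀ x ∈ S, ∀ y ∈ S, x ≠ y → ∑ a ∈ A, (x / y) ^ a = 0) :
    ∀ x ∈ S, ∀ y ∈ S, ‖φ x‖ = ‖φ y‖ := by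
  classical
  have : CharZero K := ⟨fun a b h => by simpa using congrArg ι h⟩
  have hS0 : ∀ x ∈ S, x ≠ 0 := by
    rintro x hx rfl
    simpa using hι 0 hx
  have hpos : ∀ x ∈ S, 0 < ‖φ x‖ := fun x hx => by
    rw [norm_pos_iff]
    exact (map_ne_zero φ).2 (hS0 x hx)
  have hSne : S.Nonempty := by
    rw [← Finset.card_pos, hcard]
    omega
  obtain ⟨p, hp, hpmin⟩ := S.exists_min_image (fun x => ‖φ x‖) hSne
  obtain ⟨q, hq, hqmax⟩ := S.exists_max_image (fun x => ‖φ x‖) hSne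
  rcases (hpmin q hq).eq_or_lt with hpq | hpq
  · intro x hx y hy
    have h1 := hpmin x hx
    have h2 := hqmax x hx
    have h3 := hpmin y hy
    have h4 := hqmax y hy
    linarith
  exfalso
  set L := S.filter fun x => ‖φ x‖ = ‖φ p‖ with hL
  set T := S.filter fun x => ‖φ x‖ = ‖φ q‖ with hT
  set D₁ := (S / S).filter fun r => ‖φ r‖ = 1 with hD₁
  set G := (S / S).filter fun r => 1 < ‖φ r‖ with hG
  set G' := (S / S).filter fun r => ‖φ r‖ < 1 with hG'
  have hD0 : ∀ r ∈ S / S, r ≠ 0 := by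
    intro r hr
    obtain ⟨x, hx, y, hy, rfl⟩ := Finset.mem_div.1 hr
    exact div_ne_zero (hS0 x hx) (hS0 y hy)
  have hDroot : ∀ r ∈ S / S, r ≠ 1 → ∑ a ∈ A, r ^ a = 0 := by
    intro r hr hr1
    obtain ⟨x, hx, y, hy, rfl⟩ := Finset.mem_div.1 hr
    refine hroot x hx y hy ?_
    rintro rfl
    exact hr1 (div_self (hS0 x hx))
  have hDι : ∀ r ∈ S / S, ‖ι r‖ = 1 := by
    intro r hr
    obtain ⟨x, hx, y, hy, rfl⟩ := Finset.mem_div.1 hr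
    simp [hι x hx, hι y hy]
  have hGG' : #G' = #G := by
    refine Finset.card_bij (fun r _ => r⁻¹) ?_ (fun _ _ _ _ h => inv_injective h) ?_
    · intro r hr
      obtain ⟨hr, hr1⟩ := Finset.mem_filter.1 hr
      have := norm_pos_iff.2 ((map_ne_zero φ).2 (hD0 r hr))
      obtain ⟨x, hx, y, hy, rfl⟩ := Finset.mem_div.1 hr
      refine Finset.mem_filter.2 ⟨by rw [inv_div]; exact Finset.div_mem_div hy hx, ?_⟩
      rw [map_inv₀, norm_inv]
      exact (one_lt_inv₀ this).2 hr1
    · intro r hr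
      obtain ⟨hr, hr1⟩ := Finset.mem_filter.1 hr
      obtain ⟨x, hx, y, hy, rfl⟩ := Finset.mem_div.1 hr
      refine ⟨y / x, Finset.mem_filter.2 ⟨Finset.div_mem_div hy hx, ?_⟩, inv_div _ _⟩
      rw [← inv_div, map_inv₀, norm_inv]
      exact inv_lt_one_of_one_lt₀ hr1
  -- Lower bounds for the number of ratios of each kind.
  have hLD : ∀ y ∈ S, ((S.filter fun x => ‖φ x‖ = ‖φ y‖).image (· / y)) ⊆ D₁ := by
    intro y hy r hr
    obtain ⟨x, hx, rfl⟩ := Finset.mem_image.1 hr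
    obtain ⟨hx, hxy⟩ := Finset.mem_filter.1 hx
    refine Finset.mem_filter.2 ⟨Finset.div_mem_div hx hy, ?_⟩
    rw [map_div₀, norm_div, hxy, div_self (hpos y hy).ne']
  have hcardL : ∀ y ∈ S, ∀ U : Finset K, #(U.image (· / y)) = #U := fun y hy U =>
    Finset.card_image_of_injective _ fun _ _ h => (div_left_inj' (hS0 y hy)).1 h
  have hLcard : #L ≤ #D₁ := (hcardL p hp L) ▸ Finset.card_le_card (hLD p hp)
  have hTcard : #T ≤ #D₁ := (hcardL q hq T) ▸ Finset.card_le_card (hLD q hq)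
  have hGL : ∀ y ∈ L, (S \ L).image (· / y) ⊆ G := by
    intro y hy r hr
    obtain ⟨hy, hyp⟩ := Finset.mem_filter.1 hy
    obtain ⟨x, hx, rfl⟩ := Finset.mem_image.1 hr
    obtain ⟨hx, hxL⟩ := Finset.mem_sdiff.1 hx
    refine Finset.mem_filter.2 ⟨Finset.div_mem_div hx hy, ?_⟩
    rw [map_div₀, norm_div, one_lt_div (hpos y hy), hyp]
    refine (hpmin x hx).lt_of_ne fun h => hxL (Finset.mem_filter.2 ⟨hx, h.symm⟩)
  have hGT : (S \ T).image (q / ·) ⊆ G := by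
    intro r hr
    obtain ⟨x, hx, rfl⟩ := Finset.mem_image.1 hr
    obtain ⟨hx, hxT⟩ := Finset.mem_sdiff.1 hx
    refine Finset.mem_filter.2 ⟨Finset.div_mem_div hq hx, ?_⟩
    rw [map_div₀, norm_div, one_lt_div (hpos x hx)]
    refine (hqmax x hx).lt_of_ne fun h => hxT (Finset.mem_filter.2 ⟨hx, h⟩)
  have hpL : p ∈ L := Finset.mem_filter.2 ⟨hp, rfl⟩
  have hSL : #(S \ L) = #S - #L := Finset.card_sdiff_of_subset (Finset.filter_subset _ _)
  have hST : #(S \ T) = #S - #T := Finset.card_sdiff_of_subset (Finset.filter_subset _ _)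
  have hGcardL : #S - #L ≤ #G := by
    rw [← hSL, ← hcardL p hp]
    exact Finset.card_le_card (hGL p hpL)
  have hGcardT : #S - #T ≤ #G := by
    rw [← hST]
    refine le_trans (le_of_eq ?_) (Finset.card_le_card hGT)
    refine (Finset.card_image_of_injOn fun x _ y _ hxy => ?_).symm
    have hxy : q / x = q / y := hxy
    rw [div_eq_mul_inv, div_eq_mul_inv] at hxy
    exact inv_injective (mul_left_cancel₀ (hS0 q hq) hxy)
  have hLT : #L + #T ≤ #S := by
    rw [← Finset.card_union_of_disjoint]
    · exact Finset.card_le_card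
        (Finset.union_subset (Finset.filter_subset _ _) (Finset.filter_subset _ _))
    · refine Finset.disjoint_filter.2 fun x _ hxp hxq => ?_
      exact hpq.ne (hxp.symm.trans hxq)
  -- The ratios give roots on the unit circle through `ι`, and roots off it through `φ`.
  have hmap (ψ : K →+* ℂ) : ∀ r ∈ S / S, r ≠ 1 → ∑ a ∈ A, ψ r ^ a = 0 := fun r hr hr1 => by
    simpa using congrArg ψ (hDroot r hr hr1)
  have h1D : (1 : K) ∈ D₁ :=
    Finset.mem_filter.2 ⟨Finset.mem_div.2 ⟨p, hp, p, hp, div_self (hS0 p hp)⟩, by simp⟩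
  have hdisjG : Disjoint G G' := Finset.disjoint_filter.2 fun r _ h h' => lt_asymm h h'
  have hdisjD : Disjoint (D₁.erase 1) (G ∪ G') := by
    rw [Finset.disjoint_left]
    intro r hr hr'
    have h1 := (Finset.mem_filter.1 (Finset.mem_of_mem_erase hr)).2
    rcases Finset.mem_union.1 hr' with h | h
    · exact (Finset.mem_filter.1 h).2.ne' h1
    · exact (Finset.mem_filter.1 h).2.ne h1
  have hGmem : ∀ r ∈ G ∪ G', r ∈ S / S ∧ ‖φ r‖ ≠ 1 := by
    intro r hr
    rcases Finset.mem_union.1 hr with h | h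
    · exact ⟨(Finset.mem_filter.1 h).1, (Finset.mem_filter.1 h).2.ne'⟩
    · exact ⟨(Finset.mem_filter.1 h).1, (Finset.mem_filter.1 h).2.ne⟩
  have hGne1 : ∀ r ∈ G ∪ G', r ≠ 1 := by
    rintro r hr rfl
    exact (hGmem 1 hr).2 (by simp)
  have hcircle : ∀ r ∈ D₁.erase 1 ∪ (G ∪ G'), r ∈ S / S ∧ r ≠ 1 := by
    intro r hr
    rcases Finset.mem_union.1 hr with h | h
    · exact ⟨(Finset.mem_filter.1 (Finset.mem_of_mem_erase h)).1, Finset.ne_of_mem_erase h⟩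
    · exact ⟨(hGmem r h).1, hGne1 r h⟩
  have hcount : (#D₁ - 1) + (#G + #G') + (#G + #G') ≤ M := by
    have hdisj : Disjoint ((D₁.erase 1 ∪ (G ∪ G')).image ι) ((G ∪ G').image φ) := by
      rw [Finset.disjoint_left]
      intro z hz hz'
      obtain ⟨r, hr, rfl⟩ := Finset.mem_image.1 hz
      obtain ⟨s, hs, hsr⟩ := Finset.mem_image.1 hz'
      exact (hGmem s hs).2 (hsr ▸ hDι r (hcircle r hr).1)
    rw [← Finset.card_erase_of_mem h1D, ← Finset.card_union_of_disjoint hdisjG,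
      ← Finset.card_union_of_disjoint hdisjD,
      ← Finset.card_image_of_injective (D₁.erase 1 ∪ (G ∪ G')) ι.injective,
      ← Finset.card_image_of_injective (G ∪ G') φ.injective,
      ← Finset.card_union_of_disjoint hdisj]
    refine card_le_of_sum_pow_eq_zero h0A hAM _ fun z hz => ?_
    rcases Finset.mem_union.1 hz with h | h
    · obtain ⟨r, hr, rfl⟩ := Finset.mem_image.1 h
      exact hmap ι r (hcircle r hr).1 (hcircle r hr).2
    · obtain ⟨r, hr, rfl⟩ := Finset.mem_image.1 h
      exact hmap φ r (hGmem r hr).1 (hGne1 r hr)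
  -- All the bounds are attained, so `D₁` is a group and `G` is one of its cosets.
  have hD₁pos : 1 ≤ #D₁ := Finset.card_pos.2 ⟨1, h1D⟩
  have hAL : #A = 2 * #L := by omega
  have hD₁L : #D₁ = #L := by omega
  have hGL' : #G = #(S \ L) := by omega
  have hLD' : ∀ y ∈ L, L.image (· / y) = D₁ := by
    intro y hy
    obtain ⟨hyS, hyp⟩ := Finset.mem_filter.1 hy
    refine Finset.eq_of_subset_of_card_le ?_ (by rw [hcardL y hyS, hD₁L])
    have := hLD y hyS
    rwa [hyp] at this
  have hGL'' : ∀ y ∈ L, (S \ L).image (· / y) = G := fun y hy =>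
    Finset.eq_of_subset_of_card_le (hGL y hy)
      (by rw [hcardL y (Finset.mem_filter.1 hy).1, hGL'])
  have hdiv : ∀ x ∈ D₁, ∀ y ∈ D₁, x / y ∈ D₁ := by
    intro x hx y hy
    rw [← hLD' p hpL] at hx hy
    obtain ⟨u, hu, rfl⟩ := Finset.mem_image.1 hx
    obtain ⟨w, hw, rfl⟩ := Finset.mem_image.1 hy
    rw [div_div_div_cancel_right₀ (hS0 p hp), ← hLD' w hw]
    exact Finset.mem_image_of_mem _ hu
  have hmul : ∀ g ∈ G, ∀ h ∈ D₁, g * h ∈ G := by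
    intro g hg h hh
    have hinv : h⁻¹ ∈ D₁ := by simpa using hdiv 1 h1D h hh
    rw [← hLD' p hpL] at hinv
    obtain ⟨w, hw, hwh⟩ := Finset.mem_image.1 hinv
    rw [← hGL'' p hpL] at hg
    obtain ⟨t, ht, rfl⟩ := Finset.mem_image.1 hg
    have hwh : w / p = h⁻¹ := hwh
    have : t / p * h = t / w := by
      rw [← inv_inv h, ← hwh, inv_div, div_mul_div_cancel₀ (hS0 p hp)]
    rw [this, ← hGL'' w hw]
    exact Finset.mem_image_of_mem _ ht
  have hgG : q / p ∈ G := Finset.mem_filter.2 ⟨Finset.div_mem_div hq hp, by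
    rw [map_div₀, norm_div, one_lt_div (hpos p hp)]
    exact hpq⟩
  obtain ⟨c, hc0, hc⟩ := exists_pow_eq_neg_one h0A
    (fun h => hD0 0 (Finset.mem_filter.1 h).1 rfl) h1D hdiv (by rw [hAL, hD₁L])
    (fun h hh => hDroot h (Finset.mem_filter.1 hh).1)
    (fun h hh => hDroot _ (Finset.mem_filter.1 (hmul _ hgG h hh)).1
      (hGne1 _ (Finset.mem_union_left _ (hmul _ hgG h hh))))
  have hnorm : ‖φ (q / p)‖ ^ c = 1 := by
    rw [← norm_pow, ← map_pow, hc]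
    simp
  exact (one_lt_pow₀ (Finset.mem_filter.1 hgG).2 hc0).ne' hnorm

/-- A root of `∑ x ^ a` is an algebraic integer. -/
lemma isIntegral_of_sum_pow_eq_zero {A : Finset ℕ} (hA : A.Nonempty) {z : ℂ}
    (hz : ∑ a ∈ A, z ^ a = 0) : IsIntegral ℤ z := by
  set m := A.max' hA
  have hm : m ∈ A := A.max'_mem hA
  refine ⟨X ^ m + ∑ a ∈ A.erase m, X ^ a, ?_, ?_⟩
  · refine monic_X_pow_add ((degree_sum_le _ _).trans_lt
      ((Finset.sup_lt_iff (WithBot.bot_lt_coe m)).2 fun a ha => ?_))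
    rw [degree_X_pow]
    exact WithBot.coe_lt_coe.2 <|
      (A.le_max' a (Finset.mem_of_mem_erase ha)).lt_of_ne (Finset.ne_of_mem_erase ha)
  · rw [Finset.add_sum_erase A (fun a => (X : ℤ[X]) ^ a) hm]
    simpa [eval₂_finsetSum] using hz

/-- A set of unimodular numbers containing `1`, all of whose ratios are roots of a polynomial
`∑ x ^ a` with `A ⊆ [0, M]` and `M < 5 * #A / 2`, consists of roots of unity. -/
lemma exists_pow_eq_one_of_ratios_roots {A : Finset ℕ} (h0A : 0 ∈ A) {M : ℕ}
    (hAM : ∀ a ∈ A, a ≤ M) (hM : 2 * M < 5 * #A) {S : Finset ℂ} (h1S : 1 ∈ S)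
    (hcard : #S = #A) (hnorm : ∀ x ∈ S, ‖x‖ = 1)
    (hroot : ∀ x ∈ S, ∀ y ∈ S, x ≠ y → ∑ a ∈ A, (x / y) ^ a = 0) :
    ∀ x ∈ S, ∃ n, 0 < n ∧ x ^ n = 1 := by
  classical
  have hint : ∀ x ∈ S, IsIntegral ℤ x := by
    intro x hx
    by_cases h : x = 1
    · exact h ▸ isIntegral_one
    · exact isIntegral_of_sum_pow_eq_zero ⟨0, h0A⟩ (by simpa using hroot x hx 1 h1S h)
  let K := IntermediateField.adjoin ℚ (S : Set ℂ)
  have hfin : FiniteDimensional ℚ K :=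
    IntermediateField.finiteDimensional_adjoin fun x hx => (hint x hx).tower_top
  have hK : NumberField K := { }
  let ι : K →+* ℂ := algebraMap K ℂ
  have hlift : ∀ x ∈ S, ∃ y : K, ι y = x := fun x hx =>
    ⟨⟨x, IntermediateField.subset_adjoin ℚ _ hx⟩, rfl⟩
  let S' : Finset K := S.preimage ι ι.injective.injOn
  have hS' : S'.image ι = S := by
    rw [Finset.image_preimage]
    exact Finset.filter_true_of_mem hlift
  intro x hx
  obtain ⟨y, rfl⟩ := hlift x hx
  have hy : IsIntegral ℤ y := (isIntegral_algebraMap_iff ι.injective).1 (hint _ hx)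
  obtain ⟨n, hn, hyn⟩ := NumberField.Embeddings.pow_eq_one_of_norm_eq_one K ℂ hy fun φ => by
    have := norm_eq_norm_of_ratios_roots ι φ h0A hAM hM (S := S')
      (by rw [← hcard, ← Finset.card_image_of_injective S' ι.injective, hS'])
      (fun x hx => hnorm _ (Finset.mem_preimage.1 hx))
      (fun x hx y hy hxy => ι.injective (by
        simpa using hroot _ (Finset.mem_preimage.1 hx) _ (Finset.mem_preimage.1 hy)
          (ι.injective.ne hxy)))
      y (Finset.mem_preimage.2 hx) 1 (Finset.mem_preimage.2 (by simpa using h1S))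
    simpa using this
  exact ⟨n, hn, by rw [← map_pow, hyn, map_one]⟩

end SpectralRationality

theorem stmt14 (A : Finset ℕ) (h0A : 0 ∈ A) (N : ℕ) (hN : N = A.card) (hN2 : 2 ≤ N)
    (M : ℕ) (hAM : ∀ a ∈ A, a ≤ M) (hM : 2 * M < 5 * N)
    (θ : Fin N → ℝ) (h0 : ∀ h : 0 < N, θ ⟨0, h⟩ = 0)
    (hinj : Function.Injective θ)
    (hIoo : ∀ j h, j ≠ ⟨0, h⟩ → θ j ∈ Set.Ioo (0 : ℝ) 1)
    (hspec : ∀ i j, i ≠ j →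
      ∑ a ∈ A, Complex.exp (2 * Real.pi * Complex.I * (θ i - θ j)) ^ a = 0) :
    ∀ j, ∃ q : ℚ, θ j = (q : ℝ) := by
  classical
  have hN0 : 0 < N := by omega
  set e : Fin N → ℂ := fun j => exp (2 * Real.pi * I * θ j) with he
  have hediv (i j) : e i / e j = exp (2 * Real.pi * I * (θ i - θ j)) := by
    rw [he, ← Complex.exp_sub, mul_sub]
  have heinj : Function.Injective e := by
    intro i j hij
    by_contra hne
    have h := hspec i j hne
    rw [← hediv, hij, div_self (exp_ne_zero _)] at h
    simp only [one_pow, Finset.sum_const, nsmul_eq_mul, mul_one, Nat.cast_eq_zero] at h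
    omega
  intro j
  obtain ⟨n, hn, hen⟩ := exists_pow_eq_one_of_ratios_roots h0A hAM (hN ▸ hM)
    (S := Finset.univ.image e)
    (Finset.mem_image.2 ⟨⟨0, hN0⟩, Finset.mem_univ _, by simp [he, h0 hN0]⟩)
    (by rw [Finset.card_image_of_injective _ heinj, Finset.card_fin, hN])
    (by
      intro x hx
      obtain ⟨i, _, rfl⟩ := Finset.mem_image.1 hx
      have : e i = exp ((2 * Real.pi * θ i : ℝ) * I) := by
        rw [he]
        push_cast
        ring_nf
      rw [this, norm_exp_ofReal_mul_I])
    (by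
      intro x hx y hy hxy
      obtain ⟨i, _, rfl⟩ := Finset.mem_image.1 hx
      obtain ⟨k, _, rfl⟩ := Finset.mem_image.1 hy
      rw [hediv]
      exact hspec i k fun h => hxy (h ▸ rfl))
    (e j) (Finset.mem_image_of_mem _ (Finset.mem_univ j))
  rw [he, ← Complex.exp_nat_mul, Complex.exp_eq_one_iff] at hen
  obtain ⟨k, hk⟩ := hen
  have hk' : (n : ℂ) * θ j = k :=
    mul_right_cancel₀ two_pi_I_ne_zero (by linear_combination hk)
  have hk'' : (n : ℝ) * θ j = k := by exact_mod_cast hk'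
  refine ⟨k / n, ?_⟩
  push_cast
  rw [eq_div_iff (by exact_mod_cast hn.ne'), ← hk'', mul_comm]
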